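/- Let Q be a real n×n matrix and suppose there exist constants C ≥ 0 and 0 ≤ r < 1 such that ‖Q^k‖ ≤ C·r^k for all k ≥ 1 (e.g. Q has spectral radius less than 1). Then det(I − Q) > 0, the series ∑_{k=1}^∞ trace(Q^k)/k converges, and ∑_{k=1}^∞ trace(Q^k)/k = −log det(I − Q) = log det((I − Q)⁻¹). (This identity expresses that the total mass of the rooted loop measure m̃(l) = p(l)/|l| on loops in A equals log det G_A, where for a transient chain killed outside A one has ∑_{loops l of length k} p(l) = trace(P_A^k) and G_A = (I − P_A)⁻¹.) -/

import Mathlib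

open Matrix

attribute [local instance] Matrix.linftyOpNormedRing

/-!
If `λ₁, …, λₙ` are the complex eigenvalues of `Q` with algebraic multiplicity, then
`trace (Q ^ k) = ∑ λᵢ ^ k` and `det (1 - Q) = ∏ (1 - λᵢ)`. When `Q ^ k → 0`, every `|λᵢ| < 1`, so
summing the Taylor series of `-log (1 - λᵢ)` over `i` gives
`det (1 - Q) = exp (-∑ trace (Q ^ k) / k)`. The exponent is real because `Q` is, hence the
determinant is positive and its real logarithm can be taken.

The power sum formula follows by comparing characteristic polynomials in the identity
`det (p(Q)) = ∏ p(λᵢ)`, which is multiplicative in `p` and so only has to be checked for constants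
and for `p = X + a`.
-/

open Filter Polynomial Topology

section SplitCharpoly

variable {m R : Type*} [Fintype m] [DecidableEq m] [CommRing R] [IsDomain R] {A : Matrix m m R}

theorem card_roots_charpoly_of_splits (hA : A.charpoly.Splits) :
    A.charpoly.roots.card = Fintype.card m := by
  rw [← hA.natDegree_eq_card_roots, charpoly_natDegree_eq_dim]

theorem det_one_sub_eq_prod_roots_charpoly_of_splits (hA : A.charpoly.Splits) :
    (1 - A).det = (A.charpoly.roots.map (1 - ·)).prod := by
  rw [← hA.eval_eq_prod_roots_of_monic A.charpoly_monic, eval_charpoly, map_one]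

theorem det_add_scalar_eq_prod_roots_charpoly_of_splits (hA : A.charpoly.Splits) (a : R) :
    (A + scalar m a).det = (A.charpoly.roots.map (· + a)).prod := by
  calc (A + scalar m a).det = (-(scalar m (-a) - A)).det := by
        rw [map_neg, neg_sub, sub_neg_eq_add]
    _ = (-1) ^ Fintype.card m * (A.charpoly.roots.map (-a - ·)).prod := by
        rw [det_neg, ← eval_charpoly, hA.eval_eq_prod_roots_of_monic A.charpoly_monic]
    _ = ((A.charpoly.roots.map (-a - ·)).map Neg.neg).prod := by
        rw [Multiset.prod_map_neg, Multiset.card_map, card_roots_charpoly_of_splits hA]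
    _ = (A.charpoly.roots.map (· + a)).prod := by
        simp only [Multiset.map_map, Function.comp_apply, neg_sub, sub_neg_eq_add]

theorem det_aeval_eq_prod_roots_charpoly_of_splits (hA : A.charpoly.Splits) {p : R[X]}
    (hp : p.Splits) : (aeval A p).det = (A.charpoly.roots.map p.eval).prod := by
  induction hp using Submonoid.closure_induction with
  | mem p hp =>
    rcases hp with ⟨a, rfl⟩ | ⟨a, rfl⟩
    · simp [algebraMap_eq_diagonal, card_roots_charpoly_of_splits hA]
    · simpa using! det_add_scalar_eq_prod_roots_charpoly_of_splits hA a
  | one => simp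
  | mul p q _ _ hp hq => simp [hp, hq, Multiset.prod_map_mul]

end SplitCharpoly

section SpectralMapping

variable {m K : Type*} [Fintype m] [DecidableEq m] [Field K] [IsAlgClosed K]

theorem roots_charpoly_aeval (A : Matrix m m K) (p : K[X]) :
    (aeval A p).charpoly.roots = A.charpoly.roots.map p.eval := by
  suffices h : (aeval A p).charpoly = ((A.charpoly.roots.map p.eval).map (X - C ·)).prod by
    rw [h, roots_multiset_prod_X_sub_C]
  refine Polynomial.funext fun x => ?_
  calc (aeval A p).charpoly.eval x = (aeval A (C x - p)).det := by
        rw [eval_charpoly, map_sub, aeval_C]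
        rfl
    _ = (A.charpoly.roots.map (C x - p).eval).prod :=
        det_aeval_eq_prod_roots_charpoly_of_splits (IsAlgClosed.splits _) (IsAlgClosed.splits _)
    _ = _ := by simp [eval_multiset_prod]

theorem trace_pow_eq_sum_roots_charpoly (A : Matrix m m K) (k : ℕ) :
    (A ^ k).trace = (A.charpoly.roots.map (· ^ k)).sum := by
  have h := roots_charpoly_aeval A (X ^ k)
  simp only [map_pow, aeval_X, eval_pow, eval_X] at h
  rw [trace_eq_sum_roots_charpoly, h]

end SpectralMapping

theorem hasSum_multiset_sum {ι β M : Type*} [AddCommMonoid M] [TopologicalSpace M]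
    [ContinuousAdd M] {s : Multiset ι} {f : ι → β → M} {a : ι → M}
    (h : ∀ i ∈ s, HasSum (f i) (a i)) :
    HasSum (fun b => (s.map (f · b)).sum) (s.map a).sum := by
  induction s using Multiset.induction_on with
  | empty => simp
  | cons i s ih =>
    simp only [Multiset.map_cons, Multiset.sum_cons]
    exact (h i (Multiset.mem_cons_self i s)).add
      (ih fun j hj => h j (Multiset.mem_cons_of_mem hj))

theorem tendsto_pow_zero_of_norm_pow_le {R : Type*} [SeminormedRing R] {a : R} {C r : ℝ}
    (hr0 : 0 ≤ r) (hr1 : r < 1) (ha : ∀ k : ℕ, 1 ≤ k → ‖a ^ k‖ ≤ C * r ^ k) :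
    Tendsto (a ^ ·) atTop (𝓝 0) := by
  have hgeom : Tendsto (fun k : ℕ => C * r ^ k) atTop (𝓝 0) := by
    simpa using (tendsto_pow_atTop_nhds_zero_of_lt_one hr0 hr1).const_mul C
  exact squeeze_zero_norm' (eventually_atTop.mpr ⟨1, ha⟩) hgeom

theorem norm_lt_one_of_mem_spectrum_of_tendsto_pow {𝕜 A : Type*} [NormedField 𝕜] [NormedRing A]
    [NormedAlgebra 𝕜 A] [CompleteSpace A] {a : A} (ha : Tendsto (a ^ ·) atTop (𝓝 0))
    {μ : 𝕜} (hμ : μ ∈ spectrum 𝕜 a) : ‖μ‖ < 1 := by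
  rw [← tendsto_pow_atTop_nhds_zero_iff_norm_lt_one]
  refine squeeze_zero_norm (a := fun k => ‖a ^ k‖ * ‖(1 : A)‖)
    (fun k => spectrum.norm_le_norm_mul_of_mem (spectrum.pow_mem_pow a k hμ)) ?_
  simpa using ha.norm.mul_const ‖(1 : A)‖

section ComplexMatrix

variable {m : Type*} [Fintype m] [DecidableEq m] {A : Matrix m m ℂ}

theorem hasSum_trace_pow_div_of_spectrum_norm_lt_one (hA : ∀ μ ∈ spectrum ℂ A, ‖μ‖ < 1) :
    HasSum (fun k : ℕ => (A ^ (k + 1)).trace / (k + 1))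
      (-(A.charpoly.roots.map fun μ => Complex.log (1 - μ)).sum) := by
  simp only [trace_pow_eq_sum_roots_charpoly, ← Multiset.sum_map_div, ← Multiset.sum_map_neg]
  exact hasSum_multiset_sum fun μ hμ => Complex.hasSum_taylorSeries_neg_log' <|
    hA μ (mem_spectrum_of_isRoot_charpoly (isRoot_of_mem_roots hμ))

theorem det_one_sub_eq_exp_neg_tsum_of_spectrum_norm_lt_one (hA : ∀ μ ∈ spectrum ℂ A, ‖μ‖ < 1) :
    (1 - A).det = Complex.exp (-∑' k : ℕ, (A ^ (k + 1)).trace / (k + 1)) := by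
  have one_sub_ne_zero (μ : ℂ) (hμ : μ ∈ A.charpoly.roots) : 1 - μ ≠ 0 := by
    have hlt := hA μ (mem_spectrum_of_isRoot_charpoly (isRoot_of_mem_roots hμ))
    rw [sub_ne_zero]
    rintro rfl
    simp at hlt
  rw [(hasSum_trace_pow_div_of_spectrum_norm_lt_one hA).tsum_eq, neg_neg,
    Complex.exp_multiset_sum, Multiset.map_map,
    det_one_sub_eq_prod_roots_charpoly_of_splits (IsAlgClosed.splits _)]
  exact congrArg _ <| Multiset.map_congr rfl fun μ hμ =>
    (Complex.exp_log (one_sub_ne_zero μ hμ)).symm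

end ComplexMatrix

section RealMatrix

variable {m : Type*} [Fintype m] [DecidableEq m] {Q : Matrix m m ℝ}

section

attribute [local instance] Matrix.linftyOpNormedAlgebra

theorem norm_lt_one_of_mem_spectrum_map_ofReal (hQ : Tendsto (Q ^ ·) atTop (𝓝 0)) {μ : ℂ}
    (hμ : μ ∈ spectrum ℂ (Complex.ofRealHom.mapMatrix Q)) : ‖μ‖ < 1 := by
  have hcont : Continuous (Complex.ofRealHom.mapMatrix : Matrix m m ℝ →+* Matrix m m ℂ) :=
    continuous_id.matrix_map Complex.continuous_ofReal
  have hpow : Tendsto (Complex.ofRealHom.mapMatrix Q ^ ·) atTop (𝓝 0) := by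
    simpa only [Function.comp_def, map_pow, map_zero] using (hcont.tendsto 0).comp hQ
  exact norm_lt_one_of_mem_spectrum_of_tendsto_pow hpow hμ

end

theorem trace_map_ofReal_pow_div (Q : Matrix m m ℝ) (k : ℕ) :
    (Complex.ofRealHom.mapMatrix Q ^ (k + 1)).trace / (k + 1) =
      ((Q ^ (k + 1)).trace / (k + 1) : ℝ) := by
  have htrace : (Complex.ofRealHom.mapMatrix (Q ^ (k + 1))).trace = ((Q ^ (k + 1)).trace : ℂ) :=
    (AddMonoidHom.map_trace Complex.ofRealHom _).symm
  rw [← map_pow, htrace]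
  push_cast
  rfl

theorem summable_trace_pow_div_of_tendsto_pow (hQ : Tendsto (Q ^ ·) atTop (𝓝 0)) :
    Summable fun k : ℕ => (Q ^ (k + 1)).trace / (k + 1) := by
  rw [← Complex.summable_ofReal]
  simp only [← trace_map_ofReal_pow_div]
  exact (hasSum_trace_pow_div_of_spectrum_norm_lt_one fun _ =>
    norm_lt_one_of_mem_spectrum_map_ofReal hQ).summable

theorem det_one_sub_eq_exp_neg_tsum_of_tendsto_pow (hQ : Tendsto (Q ^ ·) atTop (𝓝 0)) :
    (1 - Q).det = Real.exp (-∑' k : ℕ, (Q ^ (k + 1)).trace / (k + 1)) := by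
  apply Complex.ofReal_injective
  calc ((1 - Q).det : ℂ) = (1 - Complex.ofRealHom.mapMatrix Q).det := by
        rw [← map_one Complex.ofRealHom.mapMatrix, ← map_sub, ← RingHom.map_det,
          Complex.ofRealHom_eq_coe]
    _ = Complex.exp (-∑' k : ℕ, (Complex.ofRealHom.mapMatrix Q ^ (k + 1)).trace / (k + 1)) :=
        det_one_sub_eq_exp_neg_tsum_of_spectrum_norm_lt_one fun _ =>
          norm_lt_one_of_mem_spectrum_map_ofReal hQ
    _ = (Real.exp (-∑' k : ℕ, (Q ^ (k + 1)).trace / (k + 1)) : ℝ) := by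
        simp only [trace_map_ofReal_pow_div, ← Complex.ofReal_tsum, ← Complex.ofReal_neg,
          Complex.ofReal_exp]

end RealMatrix

theorem stmt_16_general {m : Type*} [Fintype m] [DecidableEq m] {Q : Matrix m m ℝ}
    (hQ : Tendsto (Q ^ ·) atTop (𝓝 0)) :
    0 < (1 - Q).det ∧
    Summable (fun k : ℕ => (Q ^ (k + 1)).trace / (k + 1)) ∧
    (∑' k : ℕ, (Q ^ (k + 1)).trace / (k + 1)) = -Real.log (1 - Q).det ∧
    (∑' k : ℕ, (Q ^ (k + 1)).trace / (k + 1)) = Real.log ((1 - Q)⁻¹).det := by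
  have hdet := det_one_sub_eq_exp_neg_tsum_of_tendsto_pow hQ
  have hlog : (∑' k : ℕ, (Q ^ (k + 1)).trace / (k + 1)) = -Real.log (1 - Q).det := by
    rw [hdet, Real.log_exp, neg_neg]
  refine ⟨hdet ▸ Real.exp_pos _, summable_trace_pow_div_of_tendsto_pow hQ, hlog, ?_⟩
  rw [det_nonsing_inv, Ring.inverse_eq_inv', Real.log_inv, hlog]

/-- If `Q` is a real `n×n` matrix with `‖Q^k‖ ≤ C·r^k` for all `k ≥ 1`
(for some `C ≥ 0`, `0 ≤ r < 1`, with a submultiplicative matrix norm), then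
`det(I − Q) > 0`, the series `∑_{k≥1} trace(Q^k)/k` converges, and its sum equals
`−log det(I − Q) = log det((I − Q)⁻¹)`. -/
theorem stmt_16 (n : ℕ) (Q : Matrix (Fin n) (Fin n) ℝ)
    (C r : ℝ) (hC : 0 ≤ C) (hr0 : 0 ≤ r) (hr1 : r < 1)
    (hQ : ∀ k : ℕ, 1 ≤ k → ‖Q ^ k‖ ≤ C * r ^ k) :
    0 < (1 - Q).det ∧
    Summable (fun k : ℕ => (Q ^ (k + 1)).trace / (k + 1)) ∧
    (∑' k : ℕ, (Q ^ (k + 1)).trace / (k + 1)) = -Real.log (1 - Q).det ∧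
    (∑' k : ℕ, (Q ^ (k + 1)).trace / (k + 1)) = Real.log ((1 - Q)⁻¹).det :=
  stmt_16_general (tendsto_pow_zero_of_norm_pow_le hr0 hr1 hQ)
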